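/- arXiv:1306.4236 — 2 statements merged into one kernel-verified Lean document; each statement's English description precedes it below -/
import Mathlib

section
/- For every integer k > 2 there exist constants R = R(k) and s0 = s0(k) such that for every integer s > s0, any k-uniform [R,s]-almost intersecting hypergraph has at most (s+1)·(2k-2 choose k-1) edges. -/
universe u

section Bollobas

variable {ι α : Type*} [DecidableEq α]

/-- The weight of a pair of sets of sizes `a` and `b` in Bollobás's set-pairs inequality. -/
def pairWeight (a b : ℕ) : ℚ := 1 / ((a + b).choose a : ℚ)

/-- `A i` and `B j`, for `i` and `j` in `I`, are disjoint exactly when `i = j`, and all lie in `V`. -/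
structure IsSetPairSystem (V : Finset α) (I : Finset ι) (A B : ι → Finset α) : Prop where
  left_subset : ∀ i ∈ I, A i ⊆ V
  right_subset : ∀ i ∈ I, B i ⊆ V
  disjoint : ∀ i ∈ I, Disjoint (A i) (B i)
  inter : ∀ i ∈ I, ∀ j ∈ I, i ≠ j → ¬ Disjoint (A i) (B j)

lemma pairWeight_pred (a b : ℕ) :
    (b + 1 : ℚ) * pairWeight a b = (a + b + 1) * pairWeight a (b + 1) := by
  have h := Nat.choose_mul_succ_eq (a + b) a
  have h1 : a + b + 1 - a = b + 1 := by omega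
  rw [h1] at h
  have h2 : (0 : ℚ) < ((a + b).choose a : ℚ) := by
    exact_mod_cast Nat.choose_pos (by omega)
  have h3 : (0 : ℚ) < ((a + b + 1).choose a : ℚ) := by
    exact_mod_cast Nat.choose_pos (by omega)
  have h4 : ((a + b).choose a : ℚ) * (a + b + 1) = (a + b + 1).choose a * (b + 1) := by
    exact_mod_cast h
  unfold pairWeight
  rw [← add_assoc a b 1]
  field_simp
  linarith

lemma choose_add_lt_choose_add {a c d : ℕ} (h : a < c) (hd : 0 < d) :
    (a + d).choose d < (c + d).choose d := by
  obtain ⟨e, rfl⟩ : ∃ e, d = e + 1 := ⟨d - 1, by omega⟩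
  calc (a + (e + 1)).choose (e + 1)
      < (a + (e + 1)).choose e + (a + (e + 1)).choose (e + 1) :=
        Nat.lt_add_of_pos_left (Nat.choose_pos (by omega))
    _ = (a + (e + 1) + 1).choose (e + 1) := (Nat.choose_succ_succ _ _).symm
    _ ≤ (c + (e + 1)).choose (e + 1) := Nat.choose_le_choose _ (by omega)

lemma choose_add_lt_centralBinom {a b n : ℕ} (ha : a ≤ n) (hb : b ≤ n) (h : a ≠ n ∨ b ≠ n) :
    (a + b).choose a < (n + n).choose n := by
  wlog han : a ≠ n generalizing a b
  · rw [Nat.choose_symm_add, add_comm]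
    exact this hb ha h.symm (h.resolve_left han)
  calc (a + b).choose a ≤ (a + n).choose a := Nat.choose_le_choose _ (by omega)
    _ = (a + n).choose n := Nat.choose_symm_add
    _ < (n + n).choose n := choose_add_lt_choose_add (by omega) (by omega)

lemma pairWeight_lt {a b n : ℕ} (ha : a ≤ n) (hb : b ≤ n) (h : a ≠ n ∨ b ≠ n) :
    pairWeight n n < pairWeight a b := by
  have h1 : (0 : ℚ) < (a + b).choose a := by exact_mod_cast Nat.choose_pos (by omega)
  exact one_div_lt_one_div_of_lt h1 (by exact_mod_cast choose_add_lt_centralBinom ha hb h)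

lemma sum_pairWeight_erase {V A B : Finset α} (hA : A ⊆ V) (hB : B ⊆ V) (hd : Disjoint A B)
    (hne : B.Nonempty) :
    ∑ x ∈ V \ A, pairWeight A.card (B.erase x).card = V.card * pairWeight A.card B.card := by
  have hBA : B ⊆ V \ A := Finset.subset_sdiff.2 ⟨hB, hd.symm⟩
  rw [← Finset.sum_sdiff hBA]
  have h1 : ∑ x ∈ (V \ A) \ B, pairWeight A.card (B.erase x).card
      = ((V \ A) \ B).card * pairWeight A.card B.card := by
    rw [← nsmul_eq_mul, ← Finset.sum_const]
    refine Finset.sum_congr rfl fun x hx => ?_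
    rw [Finset.erase_eq_of_notMem (Finset.mem_sdiff.1 hx).2]
  have h2 : ∑ x ∈ B, pairWeight A.card (B.erase x).card
      = B.card * pairWeight A.card (B.card - 1) := by
    rw [← nsmul_eq_mul, ← Finset.sum_const]
    refine Finset.sum_congr rfl fun x hx => ?_
    rw [Finset.card_erase_of_mem hx]
  obtain ⟨b, hb⟩ : ∃ b, B.card = b + 1 := ⟨B.card - 1, by have := hne.card_pos; omega⟩
  have h3 := pairWeight_pred A.card b
  have h4 : ((V \ A) \ B).card + B.card + A.card = V.card := by
    have := Finset.card_sdiff_add_card_eq_card hBA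
    have := Finset.card_sdiff_add_card_eq_card hA
    omega
  rw [h1, h2, ← h4, hb]
  push_cast
  linarith

variable {V : Finset α} {I : Finset ι} {A B : ι → Finset α}

namespace IsSetPairSystem

lemma erase (h : IsSetPairSystem V I A B) (x : α) :
    IsSetPairSystem (V.erase x) (I.filter fun i => x ∉ A i) A fun i => (B i).erase x where
  left_subset i hi := by
    rw [Finset.mem_filter] at hi
    exact fun y hy => Finset.mem_erase.2
      ⟨fun hxy => hi.2 (hxy ▸ hy), h.left_subset i hi.1 hy⟩
  right_subset i hi := Finset.erase_subset_erase _ (h.right_subset i (Finset.mem_filter.1 hi).1)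
  disjoint i hi := (h.disjoint i (Finset.mem_filter.1 hi).1).mono_right (Finset.erase_subset _ _)
  inter i hi j hj hij := by
    rw [Finset.mem_filter] at hi hj
    have := h.inter i hi.1 j hj.1 hij
    rw [Finset.not_disjoint_iff] at this ⊢
    obtain ⟨y, hy1, hy2⟩ := this
    exact ⟨y, hy1, Finset.mem_erase.2 ⟨fun hxy => hi.2 (hxy ▸ hy1), hy2⟩⟩

lemma sum_sum_erase (h : IsSetPairSystem V I A B) (hne : ∀ i ∈ I, (B i).Nonempty) :
    ∑ x ∈ V, ∑ i ∈ I.filter (fun i => x ∉ A i), pairWeight (A i).card ((B i).erase x).card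
      = ∑ _x ∈ V, ∑ i ∈ I, pairWeight (A i).card (B i).card := by
  rw [Finset.sum_comm' (t' := I) (s' := fun i => V \ A i)
    (by intro x y; simp only [Finset.mem_filter, Finset.mem_sdiff]; tauto), Finset.sum_const,
    nsmul_eq_mul, Finset.mul_sum]
  exact Finset.sum_congr rfl fun i hi => sum_pairWeight_erase (h.left_subset i hi)
    (h.right_subset i hi) (h.disjoint i hi) (hne i hi)

omit [DecidableEq α] in
lemma eq_singleton (h : IsSetPairSystem V I A B) {i : ι} (hi : i ∈ I) (hB : B i = ∅) :
    I = {i} := by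
  refine Finset.eq_singleton_iff_unique_mem.2 ⟨hi, fun j hj => ?_⟩
  by_contra hij
  exact h.inter j hj i hi hij (by simp [hB])

/-- Bollobás's set-pairs inequality. -/
theorem sum_pairWeight_le_one (h : IsSetPairSystem V I A B) :
    ∑ i ∈ I, pairWeight (A i).card (B i).card ≤ 1 := by
  induction hn : V.card generalizing V I B with
  | zero =>
    rcases I.eq_empty_or_nonempty with rfl | ⟨i, hi⟩
    · simp
    · have hV := Finset.card_eq_zero.1 hn
      have hB : B i = ∅ := Finset.subset_empty.1 (hV ▸ h.right_subset i hi)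
      rw [h.eq_singleton hi hB]
      simp [hB, pairWeight]
  | succ n ih =>
    by_cases hne : ∀ i ∈ I, (B i).Nonempty
    · have h1 : ∑ x ∈ V, ∑ i ∈ I.filter (fun i => x ∉ A i),
          pairWeight (A i).card ((B i).erase x).card ≤ ∑ x ∈ V, 1 :=
        Finset.sum_le_sum fun x hx =>
          ih (h.erase x) (by rw [Finset.card_erase_of_mem hx, hn, Nat.add_sub_cancel])
      rw [h.sum_sum_erase hne, Finset.sum_const, Finset.sum_const, nsmul_eq_mul, nsmul_eq_mul,
        hn] at h1
      exact le_of_mul_le_mul_left h1 (by positivity)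
    · push Not at hne
      obtain ⟨i, hi, hB⟩ := hne
      rw [h.eq_singleton hi hB]
      simp [hB, pairWeight]

lemma sum_erase_eq_one (h : IsSetPairSystem V I A B) (hne : ∀ i ∈ I, (B i).Nonempty)
    (hs : ∑ i ∈ I, pairWeight (A i).card (B i).card = 1) {x : α} (hx : x ∈ V) :
    ∑ i ∈ I.filter (fun i => x ∉ A i), pairWeight (A i).card ((B i).erase x).card = 1 := by
  have h1 := h.sum_sum_erase hne
  rw [hs] at h1
  exact (Finset.sum_eq_sum_iff_of_le fun x _ => (h.erase x).sum_pairWeight_le_one).1 h1 x hx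

/-- In a set-pair system attaining equality, every ordering of the ground set puts some `B i`
before `A i`. -/
theorem exists_le_of_sum_eq_one (h : IsSetPairSystem V I A B)
    (hs : ∑ i ∈ I, pairWeight (A i).card (B i).card = 1) (f : α → ℕ) :
    ∃ i ∈ I, ∀ x ∈ B i, ∀ y ∈ A i, f x ≤ f y := by
  induction hn : V.card generalizing V I B with
  | zero =>
    rcases I.eq_empty_or_nonempty with rfl | ⟨i, hi⟩
    · simp at hs
    · have hV := Finset.card_eq_zero.1 hn
      have hB : B i = ∅ := Finset.subset_empty.1 (hV ▸ h.right_subset i hi)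
      exact ⟨i, hi, by simp [hB]⟩
  | succ n ih =>
    by_cases hne : ∀ i ∈ I, (B i).Nonempty
    · obtain ⟨x, hx, hmin⟩ := V.exists_min_image f (Finset.card_pos.1 (by omega))
      obtain ⟨i, hi, hle⟩ := ih (h.erase x) (h.sum_erase_eq_one hne hs hx)
        (by rw [Finset.card_erase_of_mem hx, hn, Nat.add_sub_cancel])
      have hi' := (Finset.mem_filter.1 hi).1
      refine ⟨i, hi', fun y hy z hz => ?_⟩
      by_cases hyx : y = x
      · exact hyx ▸ hmin z (h.left_subset i hi' hz)
      · exact hle y (Finset.mem_erase.2 ⟨hyx, hy⟩) z hz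
    · push Not at hne
      obtain ⟨i, hi, hB⟩ := hne
      exact ⟨i, hi, by simp [hB]⟩

variable {n : ℕ}

/-- Uniform set-pair systems attaining equality are closed under exchanging two elements. -/
lemma exists_swap (h : IsSetPairSystem V I A B)
    (hs : ∑ i ∈ I, pairWeight (A i).card (B i).card = 1)
    (hA : ∀ i ∈ I, (A i).card = n) (hB : ∀ i ∈ I, (B i).card = n)
    {i : ι} (hi : i ∈ I) {a b : α} (ha : a ∈ A i) (hb : b ∈ B i) :
    ∃ j ∈ I, A j = insert b ((A i).erase a) ∧ B j = insert a ((B i).erase b) := by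
  have hab : ∀ x ∈ A i, x ∉ B i := fun x hx => Finset.disjoint_left.1 (h.disjoint i hi) hx
  have hne : a ≠ b := fun e => hab a ha (e ▸ hb)
  have key : ∀ c : ℕ, ∃ j ∈ I, a ∈ B j ∧ b ∈ A j ∧
      (∀ x ∈ A j, x = b ∨ x ∈ A i ∨ x ∉ B i ∧ 2 ≤ c) ∧
      ∀ x ∈ B j, x = a ∨ x ∈ B i ∨ x ∉ A i ∧ c ≤ 3 := by
    intro c
    set f : α → ℕ := fun x =>
      if x = a then 2 else if x = b then 3 else if x ∈ A i then 4 else if x ∈ B i then 1 else c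
      with hf
    have fa : f a = 2 := by simp [hf]
    have fb : f b = 3 := by simp [hf, hne.symm]
    obtain ⟨j, hj, hle⟩ := h.exists_le_of_sum_eq_one hs f
    have hij : i ≠ j := by
      rintro rfl
      have := hle b hb a ha
      omega
    obtain ⟨x, hxA, hxB⟩ := Finset.not_disjoint_iff.1 (h.inter i hi j hj hij)
    obtain ⟨y, hyA, hyB⟩ := Finset.not_disjoint_iff.1 (h.inter j hj i hi hij.symm)
    have hxy := hle x hxB y hyA
    have hxa : x = a := by
      by_contra hxa
      have hxb : x ≠ b := fun e => hab x hxA (e ▸ hb)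
      have hya : y ≠ a := fun e => hab y (e ▸ ha) hyB
      have hyA' : y ∉ A i := fun e => hab y e hyB
      simp only [hf, hxa, hxb, hya, hxA, hyA', hyB, if_true, if_false] at hxy
      split_ifs at hxy <;> omega
    subst hxa
    have hyb : y = b := by
      by_contra hyb
      have hya : y ≠ x := fun e => hab y (e ▸ ha) hyB
      have hyA' : y ∉ A i := fun e => hab y e hyB
      simp only [hf, hyb, hya, hyA', hyB, if_true, if_false] at hxy
      omega
    subst hyb
    refine ⟨j, hj, hxB, hyA, fun z hz => ?_, fun z hz => ?_⟩
    · have hz' := hle x hxB z hz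
      rw [fa] at hz'
      simp only [hf] at hz'
      grind
    · have hz' := hle z hz y hyA
      rw [fb] at hz'
      simp only [hf] at hz'
      grind
  obtain ⟨j, hj, haj, hbj, hjA, -⟩ := key 0
  obtain ⟨k, hk, hak, hbk, -, hkB⟩ := key 4
  have hAj : A j = insert b ((A i).erase a) := by
    refine Finset.eq_of_subset_of_card_le (fun x hx => ?_) ?_
    · have hxa : x ≠ a := fun e => Finset.disjoint_left.1 (h.disjoint j hj) hx (e ▸ haj)
      have := hjA x hx
      simp only [Finset.mem_insert, Finset.mem_erase]
      grind
    · rw [hA j hj, ← hA i hi, Finset.card_insert_of_notMem (fun hb' => hab b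
        (Finset.mem_of_mem_erase hb') hb), Finset.card_erase_add_one ha]
  have hBk : B k = insert a ((B i).erase b) := by
    refine Finset.eq_of_subset_of_card_le (fun x hx => ?_) ?_
    · have hxb : x ≠ b := fun e => Finset.disjoint_left.1 (h.disjoint k hk) hbk (e ▸ hx)
      have := hkB x hx
      simp only [Finset.mem_insert, Finset.mem_erase]
      grind
    · rw [hB k hk, ← hB i hi, Finset.card_insert_of_notMem (fun ha' => hab a ha
        (Finset.mem_of_mem_erase ha')), Finset.card_erase_add_one hb]
  have hjk : j = k := by
    by_contra hjk
    refine h.inter j hj k hk hjk ?_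
    rw [hAj, hBk, Finset.disjoint_left]
    intro x hx hx'
    simp only [Finset.mem_insert, Finset.mem_erase] at hx hx'
    have := hab x
    grind
  exact ⟨j, hj, hAj, hjk ▸ hBk⟩

lemma exists_left_eq (h : IsSetPairSystem V I A B)
    (hs : ∑ i ∈ I, pairWeight (A i).card (B i).card = 1)
    (hA : ∀ i ∈ I, (A i).card = n) (hB : ∀ i ∈ I, (B i).card = n)
    {i : ι} (hi : i ∈ I) {S : Finset α} (hS : S ⊆ A i ∪ B i) (hSn : S.card = n) :
    ∃ j ∈ I, A j = S ∧ A j ∪ B j = A i ∪ B i := by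
  induction hm : (S \ A i).card generalizing i with
  | zero =>
    have hsub : S ⊆ A i := Finset.sdiff_eq_empty_iff_subset.1 (Finset.card_eq_zero.1 hm)
    exact ⟨i, hi, (Finset.eq_of_subset_of_card_le hsub (by rw [hA i hi, hSn])).symm, rfl⟩
  | succ m ih =>
    obtain ⟨b, hb⟩ := Finset.card_pos.1 (by omega : 0 < (S \ A i).card)
    have hcard : (A i \ S).card = (S \ A i).card :=
      Finset.card_sdiff_comm (by rw [hA i hi, hSn])
    obtain ⟨a, ha⟩ := Finset.card_pos.1 (by omega : 0 < (A i \ S).card)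
    rw [Finset.mem_sdiff] at ha hb
    have hbB : b ∈ B i := (Finset.mem_union.1 (hS hb.1)).resolve_left hb.2
    obtain ⟨j, hj, hAj, hBj⟩ := h.exists_swap hs hA hB hi ha.1 hbB
    have hU : A j ∪ B j = A i ∪ B i := by
      ext x
      rw [hAj, hBj]
      simp only [Finset.mem_union, Finset.mem_insert, Finset.mem_erase]
      grind
    have hdiff : S \ A j = (S \ A i).erase b := by
      ext x
      rw [hAj]
      simp only [Finset.mem_sdiff, Finset.mem_insert, Finset.mem_erase]
      grind
    obtain ⟨l, hl, hlS, hlU⟩ := ih hj (hU ▸ hS)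
      (by rw [hdiff, Finset.card_erase_of_mem (Finset.mem_sdiff.2 hb), hm, Nat.add_sub_cancel])
    exact ⟨l, hl, hlS, hlU.trans hU⟩

/-- A uniform set-pair system attaining equality uses all subsets of the right size of a set. -/
theorem exists_forall_right_eq (h : IsSetPairSystem V I A B)
    (hs : ∑ i ∈ I, pairWeight (A i).card (B i).card = 1)
    (hA : ∀ i ∈ I, (A i).card = n) (hB : ∀ i ∈ I, (B i).card = n) :
    ∃ X : Finset α, X.card = 2 * n ∧ ∀ U ⊆ X, U.card = n → ∃ i ∈ I, B i = U := by
  obtain ⟨i, hi⟩ : I.Nonempty := by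
    by_contra hI
    rw [Finset.not_nonempty_iff_eq_empty] at hI
    simp [hI] at hs
  have hX : (A i ∪ B i).card = 2 * n := by
    rw [Finset.card_union_of_disjoint (h.disjoint i hi), hA i hi, hB i hi, two_mul]
  refine ⟨A i ∪ B i, hX, fun U hU hUn => ?_⟩
  obtain ⟨j, hj, hjU, hjX⟩ := h.exists_left_eq hs hA hB hi (S := (A i ∪ B i) \ U)
    Finset.sdiff_subset (by rw [Finset.card_sdiff_of_subset hU, hX, hUn]; omega)
  refine ⟨j, hj, ?_⟩
  rw [← Finset.union_sdiff_cancel_left (h.disjoint j hj), hjX, hjU,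
    Finset.sdiff_sdiff_eq_self hU]

/-- A set-pair system of sets of size at most `n` has at most `(2n choose n)` members, and the
bound is attained only by all the `n`-subsets of a `2n`-set. -/
theorem card_lt_or_exists (h : IsSetPairSystem V I A B)
    (hA : ∀ i ∈ I, (A i).card ≤ n) (hB : ∀ i ∈ I, (B i).card ≤ n) :
    I.card < (2 * n).choose n ∨
      ∃ X : Finset α, X.card = 2 * n ∧ ∀ U ⊆ X, U.card = n → ∃ i ∈ I, B i = U := by
  rw [or_iff_not_imp_left, not_lt]
  intro hI
  have hc : ((2 * n).choose n : ℚ) = 1 / pairWeight n n := by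
    rw [pairWeight, one_div_one_div, two_mul]
  have hle : ∀ a ≤ n, ∀ b ≤ n, pairWeight n n ≤ pairWeight a b ∧
      (pairWeight a b = pairWeight n n → a = n ∧ b = n) := by
    intro a ha b hb
    by_cases hab : a = n ∧ b = n
    · obtain ⟨rfl, rfl⟩ := hab
      simp
    · have := pairWeight_lt ha hb (by tauto)
      exact ⟨this.le, fun e => absurd e this.ne'⟩
  have hw : 0 < pairWeight n n := by
    have : (0 : ℚ) < (n + n).choose n := by exact_mod_cast Nat.choose_pos (by omega)
    exact one_div_pos.2 this
  have hsum : ∑ i ∈ I, pairWeight n n = 1 ∧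
      ∑ i ∈ I, pairWeight (A i).card (B i).card = 1 := by
    have h1 : ∑ i ∈ I, pairWeight n n ≤ ∑ i ∈ I, pairWeight (A i).card (B i).card :=
      Finset.sum_le_sum fun i hi => (hle _ (hA i hi) _ (hB i hi)).1
    have h2 := h.sum_pairWeight_le_one
    have h3 : 1 ≤ ∑ i ∈ I, pairWeight n n := by
      rw [Finset.sum_const, nsmul_eq_mul, ← div_le_iff₀ hw, ← hc]
      exact_mod_cast hI
    constructor <;> linarith
  have heq := (Finset.sum_eq_sum_iff_of_le fun i hi => (hle _ (hA i hi) _ (hB i hi)).1).1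
    (hsum.1.trans hsum.2.symm)
  have hcard := fun i hi => (hle _ (hA i hi) _ (hB i hi)).2 (heq i hi).symm
  exact h.exists_forall_right_eq hsum.2 (fun i hi => (hcard i hi).1) fun i hi => (hcard i hi).2

end IsSetPairSystem
end Bollobas

section Heavy

variable {α : Type*} [DecidableEq α]

/-- `T` is `t`-heavy in `G` if no set of at most `t` elements outside `T` meets all the members
of `G` that contain `T`. -/
def IsHeavy (G : Finset (Finset α)) (t : ℕ) (T : Finset α) : Prop :=
  ∀ Y : Finset α, Y.card ≤ t → Disjoint T Y → ∃ A ∈ G, T ⊆ A ∧ Disjoint A Y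

variable {F G : Finset (Finset α)} {k t s : ℕ} {T : Finset α}

lemma exists_isHeavy_cover_of_subset (ht : 1 ≤ t) (hG : ∀ A ∈ G, A.card = k) (d : ℕ)
    (S : Finset α) (hS : S.card + d = k) :
    ∃ L : Finset (Finset α), L.card ≤ t ^ d ∧ (∀ T ∈ L, IsHeavy G t T) ∧
      ∀ A ∈ G, S ⊆ A → ∃ T ∈ L, T ⊆ A := by
  induction d generalizing S with
  | zero =>
    by_cases hSG : S ∈ G
    · refine ⟨{S}, by simp, ?_, fun A _ hSA => ⟨S, by simp, hSA⟩⟩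
      simp only [Finset.mem_singleton, forall_eq]
      exact fun Y _ hY => ⟨S, hSG, subset_rfl, hY⟩
    · refine ⟨∅, by simp, by simp, fun A hA hSA => absurd ?_ hSG⟩
      rwa [Finset.eq_of_subset_of_card_le hSA (by rw [hG A hA]; omega)]
  | succ d ih =>
    by_cases hh : IsHeavy G t S
    · exact ⟨{S}, by simpa using Nat.one_le_pow _ _ ht, by simpa using hh,
        fun A _ hSA => ⟨S, by simp, hSA⟩⟩
    · unfold IsHeavy at hh
      push Not at hh
      obtain ⟨Y, hYt, hSY, hY⟩ := hh
      have ih' : ∀ y ∈ Y, ∃ L : Finset (Finset α), L.card ≤ t ^ d ∧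
          (∀ T ∈ L, IsHeavy G t T) ∧ ∀ A ∈ G, insert y S ⊆ A → ∃ T ∈ L, T ⊆ A := by
        intro y hy
        refine ih (insert y S) ?_
        rw [Finset.card_insert_of_notMem (Finset.disjoint_right.1 hSY hy)]
        omega
      choose! L hLc hLh hLcov using ih'
      refine ⟨Y.biUnion L, ?_, ?_, fun A hA hSA => ?_⟩
      · calc (Y.biUnion L).card ≤ Y.card * t ^ d := Finset.card_biUnion_le_card_mul _ _ _ hLc
          _ ≤ t * t ^ d := Nat.mul_le_mul_right _ hYt
          _ = t ^ (d + 1) := (pow_succ' _ _).symm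
      · intro T hT
        obtain ⟨y, hy, hTy⟩ := Finset.mem_biUnion.1 hT
        exact hLh y hy T hTy
      · obtain ⟨y, hyA, hyY⟩ := Finset.not_disjoint_iff.1 (hY A hA hSA)
        obtain ⟨T, hT, hTA⟩ := hLcov y hyY A hA (Finset.insert_subset hyA hSA)
        exact ⟨T, Finset.mem_biUnion.2 ⟨y, hyY, hT⟩, hTA⟩

/-- Boundedly many heavy sets suffice so that every member of a uniform family contains one. -/
lemma exists_isHeavy_cover (ht : 1 ≤ t) (hG : ∀ A ∈ G, A.card = k) :
    ∃ L : Finset (Finset α), L.card ≤ t ^ k ∧ (∀ T ∈ L, IsHeavy G t T) ∧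
      ∀ A ∈ G, ∃ T ∈ L, T ⊆ A := by
  obtain ⟨L, h1, h2, h3⟩ := exists_isHeavy_cover_of_subset ht hG k ∅ (by simp)
  exact ⟨L, h1, h2, fun A hA => h3 A hA (Finset.empty_subset _)⟩

omit [DecidableEq α] in
lemma exists_ssubset_of_card_lt {L : Finset (Finset α)} (hL : ∀ A ∈ G, ∃ T ∈ L, T ⊆ A)
    (hc : L.card < G.card) : ∃ A ∈ G, ∃ T ∈ L, T ⊂ A := by
  obtain ⟨A, hA, hAL⟩ := Finset.exists_mem_notMem_of_card_lt_card hc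
  obtain ⟨T, hT, hTA⟩ := hL A hA
  exact ⟨A, hA, T, hT, hTA.ssubset_of_ne fun e => hAL (e ▸ hT)⟩

/-- A large uniform family has a heavy set that is smaller than its members. -/
lemma exists_isHeavy_card_lt (ht : 1 ≤ t) (hG : ∀ A ∈ G, A.card = k) (hc : t ^ k < G.card) :
    ∃ T, IsHeavy G t T ∧ T.card < k := by
  obtain ⟨L, hLc, hLh, hL⟩ := exists_isHeavy_cover ht hG
  obtain ⟨A, hA, T, hT, hTA⟩ := exists_ssubset_of_card_lt hL (hLc.trans_lt hc)
  exact ⟨T, hLh T hT, hG A hA ▸ Finset.card_lt_card hTA⟩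

lemma IsHeavy.exists_sunflower (h : IsHeavy F t T) (hF : ∀ A ∈ F, A.card = k) (p : ℕ)
    (hp : p * k ≤ t) :
    ∃ g : ℕ → Finset α, (∀ i < p, g i ∈ F) ∧
      ∀ i < p, ∀ j < p, i ≠ j → g i ∩ g j ⊆ T := by
  induction p with
  | zero => exact ⟨fun _ => ∅, by simp, by simp⟩
  | succ p ih =>
    obtain ⟨g, hgF, hg⟩ := ih (le_trans (Nat.mul_le_mul_right _ p.le_succ) hp)
    obtain ⟨A, hA, -, hAY⟩ := h ((Finset.range p).biUnion fun i => g i \ T)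
      (by
        calc _ ≤ (Finset.range p).card * k :=
              Finset.card_biUnion_le_card_mul _ _ _ fun i hi =>
                (Finset.card_le_card Finset.sdiff_subset).trans
                  (hF _ (hgF i (Finset.mem_range.1 hi))).le
          _ ≤ t := by
              rw [Finset.card_range]
              exact le_trans (Nat.mul_le_mul_right _ p.le_succ) hp)
      ((Finset.disjoint_biUnion_right _ _ _).2 fun i _ => Finset.disjoint_sdiff)
    have hAg : ∀ i < p, A ∩ g i ⊆ T := by
      intro i hi x hx
      rw [Finset.mem_inter] at hx
      by_contra hxT
      exact Finset.disjoint_left.1 hAY hx.1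
        (Finset.mem_biUnion.2 ⟨i, Finset.mem_range.2 hi, Finset.mem_sdiff.2 ⟨hx.2, hxT⟩⟩)
    refine ⟨fun i => if i < p then g i else A, fun i _ => ?_, fun i hi j hj hij => ?_⟩
    · dsimp only
      split_ifs with h
      exacts [hgF i h, hA]
    · dsimp only
      split_ifs with h1 h2 h2
      · exact hg i h1 j h2 hij
      · rw [Finset.inter_comm]
        exact hAg i h1
      · exact hAg j h2
      · omega

/-- Few members of `F` are disjoint from a heavy set if each member is disjoint from few. -/
lemma IsHeavy.card_disjoint_le (h : IsHeavy F t T) (hF : ∀ A ∈ F, A.card = k)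
    (hs : ∀ A ∈ F, (F.filter fun B => Disjoint A B).card ≤ s) (p : ℕ) (hp : (p + k) * k ≤ t) :
    (F.filter fun B => Disjoint T B).card * p ≤ s * (p + k) := by
  obtain ⟨g, hgF, hg⟩ := h.exists_sunflower hF (p + k) hp
  have hcount : ∀ B ∈ F.filter (fun B => Disjoint T B),
      p ≤ ((Finset.range (p + k)).filter fun i => Disjoint (g i) B).card := by
    intro B hB
    rw [Finset.mem_filter] at hB
    have hsplit := Finset.card_filter_add_card_filter_not (s := Finset.range (p + k))
      (fun i => Disjoint (g i) B)
    rw [Finset.card_range] at hsplit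
    have hmeet : ((Finset.range (p + k)).filter fun i => ¬ Disjoint (g i) B).card ≤ B.card := by
      have hex : ∀ i ∈ (Finset.range (p + k)).filter fun i => ¬ Disjoint (g i) B,
          ∃ x ∈ B, x ∈ g i := by
        intro i hi
        obtain ⟨x, hx, hxB⟩ := Finset.not_disjoint_iff.1 (Finset.mem_filter.1 hi).2
        exact ⟨x, hxB, hx⟩
      rcases B.eq_empty_or_nonempty with rfl | ⟨b, -⟩
      · simp
      have : Inhabited α := ⟨b⟩
      choose! f hfB hfg using hex
      refine Finset.card_le_card_of_injOn f hfB fun i hi j hj hij => ?_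
      by_contra hne
      have hi' := Finset.mem_range.1 (Finset.mem_filter.1 hi).1
      have hj' := Finset.mem_range.1 (Finset.mem_filter.1 hj).1
      exact Finset.disjoint_left.1 hB.2 (hg i hi' j hj' hne
        (Finset.mem_inter.2 ⟨hfg i hi, hij ▸ hfg j hj⟩)) (hfB i hi)
    rw [hF B hB.1] at hmeet
    omega
  calc (F.filter fun B => Disjoint T B).card * p
      ≤ ∑ B ∈ F.filter (fun B => Disjoint T B),
          ((Finset.range (p + k)).filter fun i => Disjoint (g i) B).card := by
        rw [← smul_eq_mul]
        exact Finset.card_nsmul_le_sum _ _ _ hcount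
    _ ≤ ∑ B ∈ F, ((Finset.range (p + k)).filter fun i => Disjoint (g i) B).card :=
        Finset.sum_le_sum_of_subset (Finset.filter_subset _ _)
    _ = ∑ i ∈ Finset.range (p + k), (F.filter fun B => Disjoint (g i) B).card :=
        (Finset.sum_card_bipartiteAbove_eq_sum_card_bipartiteBelow
          (fun i B => Disjoint (g i) B)).symm
    _ ≤ (Finset.range (p + k)).card • s :=
        Finset.sum_le_card_nsmul _ _ _ fun i hi => hs _ (hgF i (Finset.mem_range.1 hi))
    _ = s * (p + k) := by rw [Finset.card_range, smul_eq_mul, mul_comm]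

/-- A family in which every member has many members disjoint from it is covered, up to boundedly
many exceptions, by the non-neighbourhoods of fewer than `(2n choose n)` heavy sets, or else all
`n`-subsets of some `2n`-set are heavy. -/
lemma exists_isHeavy_family {n : ℕ} (hF : ∀ A ∈ F, A.card = n + 1) (ht : n ≤ t) (ht1 : 1 ≤ t)
    (hR : ∀ A ∈ F, t ^ (n + 1) < (F.filter fun B => Disjoint A B).card) :
    (∃ W : Finset (Finset α), W.card < (2 * n).choose n ∧ (∀ T ∈ W, IsHeavy F t T) ∧
      (F.filter fun A => ∀ T ∈ W, ¬ Disjoint T A).card ≤ (t ^ (n + 1) + 1) * t ^ (n + 1)) ∨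
    ∃ X : Finset α, X.card = 2 * n ∧ ∀ U ⊆ X, U.card = n → IsHeavy F t U := by
  obtain ⟨L, hLc, hLh, hL⟩ := exists_isHeavy_cover ht1 hF
  set c := t ^ (n + 1) with hc
  set L' := L.filter fun T => T.card ≤ n with hL'
  have hL'cov : ∀ A ∈ F, ∃ T ∈ L', Disjoint T A := by
    intro A hA
    obtain ⟨B, hB, T, hT, hTB⟩ := exists_ssubset_of_card_lt
      (G := F.filter fun B => Disjoint A B)
      (fun B hB => hL B (Finset.mem_filter.1 hB).1) (hLc.trans_lt (hR A hA))
    rw [Finset.mem_filter] at hB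
    have := hF B hB.1 ▸ Finset.card_lt_card hTB
    exact ⟨T, Finset.mem_filter.2 ⟨hT, by omega⟩, (hB.2.mono_right hTB.subset).symm⟩
  let rest : Finset (Finset α) → Finset (Finset α) :=
    fun W => F.filter fun A => ∀ T ∈ W, ¬ Disjoint T A
  obtain ⟨W, hW, hmin⟩ := L'.powerset.exists_min_image (fun W => (rest W).card + (c + 1) * W.card)
    ⟨L', Finset.mem_powerset_self _⟩
  rw [Finset.mem_powerset] at hW
  have hWh : ∀ T ∈ W, IsHeavy F t T := fun T hT => hLh T (Finset.mem_filter.1 (hW hT)).1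
  have hWc : ∀ T ∈ W, T.card ≤ n := fun T hT => (Finset.mem_filter.1 (hW hT)).2
  have hrest : (rest W).card ≤ (c + 1) * c := by
    have h1 := hmin L' (Finset.mem_powerset_self _)
    have h2 : rest L' = ∅ := by
      refine Finset.filter_eq_empty_iff.2 fun A hA hall => ?_
      obtain ⟨T, hT, hTA⟩ := hL'cov A hA
      exact hall T hT hTA
    have h3 : (c + 1) * L'.card ≤ (c + 1) * c :=
      Nat.mul_le_mul_left _ ((Finset.card_filter_le _ _).trans hLc)
    simp only [h2, Finset.card_empty] at h1
    omega
  let priv : Finset α → Finset (Finset α) := fun T =>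
    F.filter fun A => Disjoint T A ∧ ∀ T' ∈ W, T' ≠ T → ¬ Disjoint T' A
  have hpriv : ∀ T ∈ W, c < (priv T).card := by
    intro T hT
    have h1 := hmin (W.erase T) (Finset.mem_powerset.2 ((Finset.erase_subset _ _).trans hW))
    have h2 : rest (W.erase T) ⊆ rest W ∪ priv T := by
      intro A hA
      simp only [rest, priv, Finset.mem_filter, Finset.mem_union, Finset.mem_erase] at hA ⊢
      by_cases hTA : Disjoint T A
      · exact Or.inr ⟨hA.1, hTA, fun T' hT' hne => hA.2 T' ⟨hne, hT'⟩⟩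
      · refine Or.inl ⟨hA.1, fun T' hT' => ?_⟩
        by_cases hne : T' = T
        · exact hne ▸ hTA
        · exact hA.2 T' ⟨hne, hT'⟩
    have h3 := (Finset.card_le_card h2).trans (Finset.card_union_le _ _)
    have h4 := Finset.card_erase_add_one hT
    rw [← h4, mul_add] at h1
    omega
  have hS : ∀ T ∈ W, ∃ S, IsHeavy (priv T) t S ∧ S.card < n + 1 := fun T hT =>
    exists_isHeavy_card_lt ht1 (fun A hA => hF A (Finset.mem_filter.1 hA).1) (hpriv T hT)
  choose! S hSh hSc using hS
  have hsys : IsSetPairSystem (W.biUnion fun T => S T ∪ T) W S id :=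
    { left_subset := fun T hT =>
        Finset.subset_union_left.trans (Finset.subset_biUnion_of_mem (fun T => S T ∪ T) hT)
      right_subset := fun T hT =>
        Finset.subset_union_right.trans (Finset.subset_biUnion_of_mem (fun T => S T ∪ T) hT)
      disjoint := fun T hT => by
        obtain ⟨A, hA, hSA, -⟩ := hSh T hT ∅ (by simp) (by simp)
        exact (Finset.mem_filter.1 hA).2.1.symm.mono_left hSA
      inter := fun T hT T' hT' hne hdis => by
        obtain ⟨A, hA, -, hAT⟩ := hSh T hT T' ((hWc T' hT').trans ht) hdis
        exact (Finset.mem_filter.1 hA).2.2 T' hT' hne.symm hAT.symm }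
  rcases hsys.card_lt_or_exists (fun T hT => Nat.lt_succ_iff.1 (hSc T hT)) hWc with h | ⟨X, hX, h⟩
  · exact Or.inl ⟨W, h, hWh, hrest⟩
  · refine Or.inr ⟨X, hX, fun U hU hUn => ?_⟩
    obtain ⟨T, hT, rfl⟩ := h U hU hUn
    exact hWh T hT

end Heavy

section Trace

variable {α : Type*} [DecidableEq α]

/-- The members of `F` whose trace on `X` is `S`. -/
def traceFiber (F : Finset (Finset α)) (X S : Finset α) : Finset (Finset α) :=
  F.filter fun A => A ∩ X = S

variable {F : Finset (Finset α)} {X S U B : Finset α} {n s : ℕ}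

lemma two_le_choose {m : ℕ} (hn : 1 ≤ n) (h : n < m) : 2 ≤ m.choose n :=
  calc 2 ≤ (n + 1).choose n := by rw [Nat.choose_succ_self_right]; omega
    _ ≤ m.choose n := Nat.choose_le_choose _ h

lemma card_traceFiber_filter_not_disjoint_le (hF : ∀ A ∈ F, A.card = n + 1) (hS : S.card = n)
    (hB : Disjoint B S) :
    ((traceFiber F X S).filter fun A => ¬ Disjoint B A).card ≤ (B \ X).card := by
  refine (Finset.card_le_card (t := (B \ X).image fun x => insert x S) fun A hA => ?_).trans
    Finset.card_image_le
  rw [Finset.mem_filter, traceFiber, Finset.mem_filter] at hA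
  obtain ⟨⟨hAF, hAS⟩, hAB⟩ := hA
  obtain ⟨x, hxB, hxA⟩ := Finset.not_disjoint_iff.1 hAB
  have hxS : x ∉ S := Finset.disjoint_left.1 hB hxB
  have hxX : x ∉ X := fun h => hxS (hAS ▸ Finset.mem_inter.2 ⟨hxA, h⟩)
  refine Finset.mem_image.2 ⟨x, Finset.mem_sdiff.2 ⟨hxB, hxX⟩, ?_⟩
  refine Finset.eq_of_subset_of_card_le
    (Finset.insert_subset hxA (hAS ▸ Finset.inter_subset_left)) ?_
  rw [hF A hAF, Finset.card_insert_of_notMem hxS, hS]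

lemma card_traceFiber_le (hF : ∀ A ∈ F, A.card = n + 1) (hS : S.card = n)
    (hB : Disjoint B S) :
    (traceFiber F X S).card ≤
      ((traceFiber F X S).filter fun A => Disjoint B A).card + (B \ X).card := by
  rw [← Finset.card_filter_add_card_filter_not (s := traceFiber F X S) (fun A => Disjoint B A)]
  exact Nat.add_le_add_left (card_traceFiber_filter_not_disjoint_le hF hS hB) _

/-- The members of a family of `(n+1)`-sets other than those with a given trace on a `2n`-set `X`
lie inside `X` or are disjoint from one of the other `n`-subsets of `X`. -/
lemma card_le_card_traceFiber_add (hn : 1 ≤ n) (hF : ∀ A ∈ F, A.card = n + 1)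
    (hX : X.card = 2 * n) (U : Finset α) :
    F.card ≤ (traceFiber F X (X \ U)).card + (2 * n).choose (n + 1) +
      ∑ V ∈ (X.powersetCard n).erase U, (F.filter fun A => Disjoint V A).card := by
  have hsub : F ⊆ (traceFiber F X (X \ U) ∪ X.powersetCard (n + 1)) ∪
      ((X.powersetCard n).erase U).biUnion fun V => F.filter fun A => Disjoint V A := by
    intro A hA
    have hcard := Finset.card_inter_add_card_sdiff X A
    have hAX : (X ∩ A).card ≤ n + 1 :=
      (Finset.card_le_card Finset.inter_subset_right).trans (hF A hA).le
    simp only [Finset.mem_union, Finset.mem_biUnion, traceFiber, Finset.mem_filter]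
    have hex : ∀ V, V ⊆ X \ A → V.card = n → V ≠ U →
        ∃ V ∈ (X.powersetCard n).erase U, A ∈ F ∧ Disjoint V A := fun V hV hVn hne =>
      ⟨V, Finset.mem_erase.2 ⟨hne, Finset.mem_powersetCard.2
        ⟨hV.trans Finset.sdiff_subset, hVn⟩⟩, hA, Finset.sdiff_disjoint.mono_left hV⟩
    rcases lt_trichotomy (X \ A).card n with h | h | h
    · have hXA : X ∩ A = A :=
        Finset.eq_of_subset_of_card_le Finset.inter_subset_right (by rw [hF A hA]; omega)
      exact Or.inl (Or.inr (Finset.mem_powersetCard.2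
        ⟨hXA ▸ Finset.inter_subset_left, hF A hA⟩))
    · by_cases hne : X \ A = U
      · refine Or.inl (Or.inl ⟨hA, ?_⟩)
        rw [← hne, sdiff_sdiff_right_self, Finset.inter_comm]
        rfl
      · exact Or.inr (hex _ subset_rfl h hne)
    · obtain ⟨V, hV, hne⟩ := Finset.exists_mem_ne (s := (X \ A).powersetCard n)
        (by rw [Finset.card_powersetCard]; exact two_le_choose hn h) U
      rw [Finset.mem_powersetCard] at hV
      exact Or.inr (hex V hV.1 hV.2 hne)
  refine (Finset.card_le_card hsub).trans ((Finset.card_union_le _ _).trans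
    (Nat.add_le_add ((Finset.card_union_le _ _).trans ?_) Finset.card_biUnion_le))
  rw [Finset.card_powersetCard, hX]

/-- If two opposite trace fibres are large, then the non-neighbourhood of `U` is essentially
bounded by `s + 1`. -/
lemma two_mul_card_traceFiber_add_le (hF : ∀ A ∈ F, A.card = n + 1)
    (hs : ∀ A ∈ F, (F.filter fun B => Disjoint A B).card ≤ s)
    (hX : X.card = 2 * n) (hU : U ⊆ X) (hUn : U.card = n)
    (hlarge : 2 * (n + 1) ≤ (traceFiber F X U).card) :
    2 * (traceFiber F X (X \ U)).card +
      (F.filter fun A => (A ∩ X).card < n ∧ Disjoint U A).card ≤ 2 * (s + 1) := by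
  set P := traceFiber F X (X \ U) with hP
  set Q := traceFiber F X U with hQ
  set D := F.filter fun A => (A ∩ X).card < n ∧ Disjoint U A with hD
  have hXU : (X \ U).card = n := by rw [Finset.card_sdiff_of_subset hU, hX, hUn]; omega
  have h1 : ∀ B ∈ Q, P.card + (D.filter fun A => Disjoint B A).card ≤ s + 1 := by
    intro B hB
    rw [hQ, traceFiber, Finset.mem_filter] at hB
    have hBd : Disjoint B (X \ U) := by
      rw [Finset.disjoint_left]
      intro x hxB hx
      rw [Finset.mem_sdiff] at hx
      exact hx.2 (hB.2 ▸ Finset.mem_inter.2 ⟨hxB, hx.1⟩)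
    have hBX : (B \ X).card = 1 := by
      have := Finset.card_inter_add_card_sdiff B X
      rw [hB.2, hUn, hF B hB.1] at this
      omega
    have h2 := card_traceFiber_le (X := X) hF hXU hBd
    rw [← hP] at h2
    have h3 : Disjoint (P.filter fun A => Disjoint B A) (D.filter fun A => Disjoint B A) := by
      rw [Finset.disjoint_left]
      intro A hAP hAD
      rw [Finset.mem_filter, hP, traceFiber, Finset.mem_filter] at hAP
      rw [Finset.mem_filter, hD, Finset.mem_filter] at hAD
      have := hAD.1.2.1
      rw [hAP.1.2, hXU] at this
      omega
    have h4 : (P.filter fun A => Disjoint B A) ∪ (D.filter fun A => Disjoint B A) ⊆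
        F.filter fun A => Disjoint B A :=
      Finset.union_subset (Finset.filter_subset_filter _ (Finset.filter_subset _ _))
        (Finset.filter_subset_filter _ (Finset.filter_subset _ _))
    have h5 := (Finset.card_le_card h4).trans (hs B hB.1)
    rw [Finset.card_union_of_disjoint h3] at h5
    rw [hBX] at h2
    omega
  have h2 : ∀ A ∈ D, Q.card ≤ (Q.filter fun B => Disjoint B A).card + (n + 1) := by
    intro A hA
    rw [hD, Finset.mem_filter] at hA
    have h3 := card_traceFiber_le (X := X) hF hUn hA.2.2.symm
    have h4 : (A \ X).card ≤ n + 1 :=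
      (Finset.card_le_card Finset.sdiff_subset).trans (hF A hA.1).le
    simp only [disjoint_comm (a := A), ← hQ] at h3
    omega
  have h3 := Finset.sum_le_sum h1
  have h4 := Finset.sum_le_sum h2
  have h5 := Finset.sum_card_bipartiteAbove_eq_sum_card_bipartiteBelow
    (s := Q) (t := D) (fun B A => Disjoint B A)
  simp only [Finset.bipartiteAbove, Finset.bipartiteBelow] at h5
  simp only [Finset.sum_add_distrib, Finset.sum_const, smul_eq_mul] at h3 h4
  have hpos : 0 < Q.card := by omega
  refine le_of_mul_le_mul_left ?_ hpos
  nlinarith [Nat.mul_le_mul_left D.card hlarge]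

/-- The upper bound when all the `n`-subsets of some `2n`-set are disjoint from few members. -/
lemma card_le_of_forall_powersetCard (hn : 1 ≤ n) (hF : ∀ A ∈ F, A.card = n + 1)
    (hs : ∀ A ∈ F, (F.filter fun B => Disjoint A B).card ≤ s)
    (hR : ∀ A ∈ F, ∃ B ∈ F, Disjoint A B) (hX : X.card = 2 * n)
    (hXs : ∀ U ⊆ X, U.card = n → (F.filter fun A => Disjoint U A).card * (4 * (2 * n).choose n) ≤
      s * (4 * (2 * n).choose n + 1))
    (hlarge : 4 * ((2 * n).choose (n + 1) + (n + 1)) < s) :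
    F.card ≤ (s + 1) * (2 * n).choose n := by
  by_contra! hcon
  set M := (2 * n).choose n with hM
  set q := (2 * n).choose (n + 1) with hq
  have hM1 : 1 ≤ M := Nat.choose_pos (by omega)
  have hcardS : (X.powersetCard n).card = M := by rw [Finset.card_powersetCard, hX]
  have hfib : ∀ U ⊆ X, U.card = n → 3 * s ≤ 4 * (traceFiber F X U).card + 4 * q := by
    intro U hU hUn
    have hXU : (X \ U).card = n := by rw [Finset.card_sdiff_of_subset hU, hX, hUn]; omega
    have h1 := card_le_card_traceFiber_add hn hF hX (X \ U)
    rw [Finset.sdiff_sdiff_eq_self hU] at h1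
    have h2 : (∑ V ∈ (X.powersetCard n).erase (X \ U),
        (F.filter fun A => Disjoint V A).card) * (4 * M) ≤ (M - 1) * (s * (4 * M + 1)) := by
      rw [Finset.sum_mul, ← hcardS, ← Finset.card_erase_of_mem (Finset.mem_powersetCard.2
        ⟨Finset.sdiff_subset (s := X) (t := U), hXU⟩), hcardS, ← smul_eq_mul]
      refine Finset.sum_le_card_nsmul _ _ _ fun V hV => ?_
      have := Finset.mem_powersetCard.1 (Finset.mem_of_mem_erase hV)
      exact hXs V this.1 this.2
    generalize (∑ V ∈ (X.powersetCard n).erase (X \ U),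
        (F.filter fun A => Disjoint V A).card) = r at h1 h2
    obtain ⟨m, hm⟩ : ∃ m, M = m + 1 := ⟨M - 1, by omega⟩
    rw [hm, Nat.add_sub_cancel] at h2
    rw [hm] at hcon
    refine le_of_mul_le_mul_left ?_ (Nat.succ_pos m)
    nlinarith
  have hin : ∀ A ∈ F, (A ∩ X).card ≤ n := by
    intro A hA
    by_contra! hAX
    obtain ⟨B, hB, hAB⟩ := hR A hA
    have hXB : n < (X \ B).card := hAX.trans_le (Finset.card_le_card (Finset.subset_sdiff.2
      ⟨Finset.inter_subset_right, hAB.mono_left Finset.inter_subset_left⟩))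
    have htwo : 1 < ((X \ B).powersetCard n).card := by
      rw [Finset.card_powersetCard]; exact two_le_choose hn hXB
    obtain ⟨S, hS, S', hS', hne⟩ := Finset.one_lt_card.1 htwo
    rw [Finset.mem_powersetCard] at hS hS'
    have h1 := card_traceFiber_le (X := X) hF hS.2 (Finset.disjoint_sdiff.mono_right hS.1)
    have h2 := card_traceFiber_le (X := X) hF hS'.2 (Finset.disjoint_sdiff.mono_right hS'.1)
    have h3 := hfib S (hS.1.trans Finset.sdiff_subset) hS.2
    have h4 := hfib S' (hS'.1.trans Finset.sdiff_subset) hS'.2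
    have h5 : (B \ X).card ≤ n + 1 :=
      (Finset.card_le_card Finset.sdiff_subset).trans (hF B hB).le
    have h6 : Disjoint ((traceFiber F X S).filter fun A => Disjoint B A)
        ((traceFiber F X S').filter fun A => Disjoint B A) := by
      rw [Finset.disjoint_left]
      intro C hC hC'
      rw [Finset.mem_filter, traceFiber, Finset.mem_filter] at hC hC'
      exact hne (hC.1.2.symm.trans hC'.1.2)
    have h7 : ((traceFiber F X S).filter fun A => Disjoint B A) ∪
        ((traceFiber F X S').filter fun A => Disjoint B A) ⊆ F.filter fun A => Disjoint B A :=
      Finset.union_subset (Finset.filter_subset_filter _ (Finset.filter_subset _ _))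
        (Finset.filter_subset_filter _ (Finset.filter_subset _ _))
    have h8 := (Finset.card_le_card h7).trans (hs B hB)
    rw [Finset.card_union_of_disjoint h6] at h8
    omega
  set D := F.filter fun A => (A ∩ X).card < n with hD
  have hcover : F.card ≤
      ∑ U ∈ X.powersetCard n, (traceFiber F X (X \ U)).card + D.card := by
    have hsub : F ⊆ ((X.powersetCard n).biUnion fun U => traceFiber F X (X \ U)) ∪ D := by
      intro A hA
      rw [Finset.mem_union, hD, Finset.mem_filter, Finset.mem_biUnion]
      rcases (hin A hA).lt_or_eq with h | h
      · exact Or.inr ⟨hA, h⟩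
      · refine Or.inl ⟨X \ (A ∩ X), Finset.mem_powersetCard.2 ⟨Finset.sdiff_subset, ?_⟩,
          Finset.mem_filter.2 ⟨hA, ?_⟩⟩
        · rw [Finset.card_sdiff_of_subset Finset.inter_subset_right, h, hX]; omega
        · rw [Finset.sdiff_sdiff_eq_self Finset.inter_subset_right]
    exact (Finset.card_le_card hsub).trans ((Finset.card_union_le _ _).trans
      (Nat.add_le_add_right Finset.card_biUnion_le _))
  have hdouble : D.card * 2 ≤
      ∑ U ∈ X.powersetCard n, (F.filter fun A => (A ∩ X).card < n ∧ Disjoint U A).card := by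
    have h1 := Finset.sum_card_bipartiteAbove_eq_sum_card_bipartiteBelow
      (s := X.powersetCard n) (t := D) (fun U A => Disjoint U A)
    simp only [Finset.bipartiteAbove, Finset.bipartiteBelow, hD, Finset.filter_filter] at h1
    rw [h1, ← smul_eq_mul]
    refine Finset.card_nsmul_le_sum _ _ _ fun A hA => ?_
    have hXA : n < (X \ A).card := by
      have := Finset.card_sdiff_add_card_inter X A
      rw [Finset.inter_comm] at this
      have := (Finset.mem_filter.1 hA).2
      omega
    refine (two_le_choose hn hXA).trans ?_
    rw [← Finset.card_powersetCard]
    refine Finset.card_le_card fun U hU => ?_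
    rw [Finset.mem_powersetCard] at hU
    exact Finset.mem_filter.2 ⟨Finset.mem_powersetCard.2
      ⟨hU.1.trans Finset.sdiff_subset, hU.2⟩, Finset.sdiff_disjoint.mono_left hU.1⟩
  have hsum : ∑ U ∈ X.powersetCard n, (2 * (traceFiber F X (X \ U)).card +
      (F.filter fun A => (A ∩ X).card < n ∧ Disjoint U A).card) ≤ M * (2 * (s + 1)) := by
    rw [← hcardS, ← smul_eq_mul]
    refine Finset.sum_le_card_nsmul _ _ _ fun U hU => ?_
    rw [Finset.mem_powersetCard] at hU
    have := hfib U hU.1 hU.2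
    exact two_mul_card_traceFiber_add_le hF hs hX hU.1 hU.2 (by omega)
  rw [Finset.sum_add_distrib, ← Finset.mul_sum] at hsum
  nlinarith

end Trace

/-- For every `k > 2` there exist constants `R = R(k)` and `s0 = s0(k)`
such that for every `s > s0`, any `k`-uniform `[R,s]`-almost intersecting hypergraph has
at most `(s+1) * (2k-2 choose k-1)` edges. -/
theorem stmt_4 (k : ℕ) (hk : 2 < k) :
    ∃ R s0 : ℕ, ∀ s : ℕ, s0 < s →
      ∀ (α : Type u) [DecidableEq α] (F : Finset (Finset α)),
        (∀ A ∈ F, A.card = k) →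
        (∀ A ∈ F, R ≤ (F.filter fun B => Disjoint A B).card ∧
          (F.filter fun B => Disjoint A B).card ≤ s) →
        F.card ≤ (s + 1) * Nat.choose (2 * k - 2) (k - 1) := by
  obtain ⟨n, rfl⟩ : ∃ n, k = n + 1 := ⟨k - 1, by omega⟩
  rw [show 2 * (n + 1) - 2 = 2 * n by omega, Nat.add_sub_cancel]
  set M := (2 * n).choose n with hM
  have hM1 : 1 ≤ M := Nat.choose_pos (by omega)
  set p := 4 * M * (n + 1) with hp
  set t := (p + (n + 1)) * (n + 1) with ht
  have htn : n + 1 ≤ t := by nlinarith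
  set c := t ^ (n + 1) with hc
  refine ⟨c + 1, 4 * ((2 * n).choose (n + 1) + (n + 1)) + 2 * ((c + 1) * c), ?_⟩
  intro s hs α _ F hF hdeg
  have hheavy : ∀ T, IsHeavy F t T →
      (F.filter fun A => Disjoint T A).card * (4 * M) ≤ s * (4 * M + 1) := by
    intro T hT
    have h1 := hT.card_disjoint_le hF (fun A hA => (hdeg A hA).2) p le_rfl
    refine le_of_mul_le_mul_right ?_ n.succ_pos
    calc _ = _ := by rw [hp, Nat.succ_eq_add_one]; ring
      _ ≤ _ := h1
      _ = _ := by rw [hp, Nat.succ_eq_add_one]; ring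
  rcases exists_isHeavy_family hF (by omega) (by omega : 1 ≤ t)
    (fun A hA => (hdeg A hA).1) with ⟨W, hWc, hWh, hrest⟩ | ⟨X, hX, hXh⟩
  · have hcover : F.card ≤ ∑ T ∈ W, (F.filter fun A => Disjoint T A).card + (c + 1) * c := by
      have hsub : F ⊆ (W.biUnion fun T => F.filter fun A => Disjoint T A) ∪
          F.filter fun A => ∀ T ∈ W, ¬ Disjoint T A := by
        intro A hA
        simp only [Finset.mem_union, Finset.mem_biUnion, Finset.mem_filter]
        by_cases h : ∀ T ∈ W, ¬ Disjoint T A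
        · exact Or.inr ⟨hA, h⟩
        · push Not at h
          obtain ⟨T, hT, hTA⟩ := h
          exact Or.inl ⟨T, hT, hA, hTA⟩
      exact (Finset.card_le_card hsub).trans ((Finset.card_union_le _ _).trans
        (Nat.add_le_add Finset.card_biUnion_le hrest))
    have hsum : (∑ T ∈ W, (F.filter fun A => Disjoint T A).card) * (4 * M) ≤
        W.card * (s * (4 * M + 1)) := by
      rw [Finset.sum_mul, ← smul_eq_mul]
      exact Finset.sum_le_card_nsmul _ _ _ fun T hT => hheavy T (hWh T hT)
    have hWM : W.card * (s * (4 * M + 1)) ≤ (M - 1) * (s * (4 * M + 1)) :=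
      Nat.mul_le_mul_right _ (by omega)
    obtain ⟨m, hm⟩ : ∃ m, M = m + 1 := ⟨M - 1, by omega⟩
    have hsc : 2 * ((c + 1) * c) ≤ s := by omega
    generalize (c + 1) * c = e at hcover hsc
    generalize (∑ T ∈ W, (F.filter fun A => Disjoint T A).card) = r at hcover hsum
    have hr := hsum.trans hWM
    rw [hm, Nat.add_sub_cancel] at hr
    rw [hm]
    refine le_of_mul_le_mul_left ?_ (by positivity : 0 < 4 * (m + 1))
    nlinarith
  · refine card_le_of_forall_powersetCard (by omega) hF (fun A hA => (hdeg A hA).2)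
      (fun A hA => ?_) hX (fun U hU hUn => hheavy U (hXh U hU hUn)) (by omega)
    obtain ⟨B, hB⟩ := Finset.card_pos.1 (c.succ_pos.trans_le (hdeg A hA).1)
    rw [Finset.mem_filter] at hB
    exact ⟨B, hB.1, hB.2⟩
end

section
/- For every integer k > 2 and every real ε > 0, there exist constants R and s0 such that for every integer s > s0, any k-uniform [R,s]-almost intersecting hypergraph has at most (1+ε)·(s+1)·(2k-2 choose k-1) edges. -/
universe u

section SetFamilies

variable {α : Type u} [DecidableEq α]

/-- `S` is a sunflower with kernel `K`: every member contains `K`, and the petals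
`A \ K` are pairwise disjoint. -/
def IsSunflower (S : Finset (Finset α)) (K : Finset α) : Prop :=
  (∀ A ∈ S, K ⊆ A) ∧ (S : Set (Finset α)).PairwiseDisjoint fun A => A \ K

/-- A set disjoint from the kernel of a sunflower meets at most as many members as it has
elements. -/
lemma IsSunflower.card_filter_not_disjoint_le {S : Finset (Finset α)} {K B : Finset α}
    (h : IsSunflower S K) (hB : Disjoint K B) :
    (S.filter fun A => ¬ Disjoint A B).card ≤ B.card := by
  have h1 : (S.filter fun A => ¬ Disjoint A B).card ≤
      ((S.filter fun A => ¬ Disjoint A B).biUnion fun A => (A \ K) ∩ B).card := by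
    apply Finset.card_le_card_biUnion
    · intro A hA A' hA' hne
      have := h.2 (Finset.mem_of_mem_filter A hA) (Finset.mem_of_mem_filter A' hA') hne
      exact this.mono Finset.inter_subset_left Finset.inter_subset_left
    · intro A hA
      obtain ⟨x, hxA, hxB⟩ := Finset.not_disjoint_iff.1 (Finset.mem_filter.1 hA).2
      exact ⟨x, by simp [hxA, hxB, Finset.disjoint_right.1 hB hxB]⟩
  exact h1.trans (Finset.card_le_card
    (Finset.biUnion_subset.2 fun A _ => Finset.inter_subset_right))

lemma IsSunflower.card_kernel_lt {S : Finset (Finset α)} {K : Finset α} {k : ℕ}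
    (h : IsSunflower S K) (hS : 1 < S.card) (hk : ∀ A ∈ S, A.card = k) : K.card < k := by
  by_contra! hK
  obtain ⟨A, hA, B, hB, hne⟩ := Finset.one_lt_card.1 hS
  apply hne
  rw [← Finset.eq_of_subset_of_card_le (h.1 A hA) (by rw [hk A hA]; exact hK),
    ← Finset.eq_of_subset_of_card_le (h.1 B hB) (by rw [hk B hB]; exact hK)]

/-- The number of members of a `k`-uniform family missing the kernel of a large sunflower is
controlled by the number of members missing a given member of the sunflower. -/
lemma IsSunflower.card_filter_disjoint_mul_le {F S : Finset (Finset α)} {K : Finset α}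
    {k d s : ℕ} (h : IsSunflower S K) (hS : S.card = k + d) (hF : ∀ A ∈ F, A.card = k)
    (hs : ∀ A ∈ S, (F.filter fun B => Disjoint A B).card ≤ s) :
    (F.filter fun B => Disjoint K B).card * d ≤ (k + d) * s := by
  have key := Finset.sum_card_bipartiteAbove_eq_sum_card_bipartiteBelow
    (s := S) (t := F.filter fun B => Disjoint K B) (fun A B : Finset α => Disjoint A B)
  have upper : ∑ A ∈ S, ((F.filter fun B => Disjoint K B).bipartiteAbove
      (fun A B : Finset α => Disjoint A B) A).card ≤ S.card * s := by
    rw [← smul_eq_mul]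
    refine Finset.sum_le_card_nsmul _ _ _ fun A hA => (Finset.card_le_card ?_).trans (hs A hA)
    exact Finset.filter_subset_filter _ (Finset.filter_subset _ _)
  have lower : (F.filter fun B => Disjoint K B).card * d ≤
      ∑ B ∈ F.filter fun B => Disjoint K B,
        (S.bipartiteBelow (fun A B : Finset α => Disjoint A B) B).card := by
    rw [← smul_eq_mul]
    refine Finset.card_nsmul_le_sum _ _ _ fun B hB => ?_
    obtain ⟨hBF, hKB⟩ := Finset.mem_filter.1 hB
    have h1 := h.card_filter_not_disjoint_le hKB
    have h2 := S.card_filter_add_card_filter_not fun A => Disjoint A B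
    rw [hF B hBF] at h1
    simp only [Finset.bipartiteBelow]
    omega
  rw [← hS]
  exact lower.trans (key ▸ upper)

end SetFamilies

/-- The sunflower lemma: large uniform families contain large sunflowers. -/
lemma exists_isSunflower_of_card_le (m k : ℕ) :
    ∃ R : ℕ, ∀ (α : Type u) [DecidableEq α] (G : Finset (Finset α)),
      (∀ A ∈ G, A.card = k) → R ≤ G.card →
        ∃ S ⊆ G, S.card = m ∧ ∃ K, IsSunflower S K := by
  induction k with
  | zero =>
    refine ⟨2, fun α _ G hG hR => ?_⟩
    obtain ⟨A, hA, B, hB, hne⟩ := Finset.one_lt_card.1 hR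
    exact absurd ((Finset.card_eq_zero.1 (hG A hA)).trans
      (Finset.card_eq_zero.1 (hG B hB)).symm) hne
  | succ k ih =>
    obtain ⟨R, ih⟩ := ih
    refine ⟨m * (k + 1) * R + 1, fun α _ G hG hR => ?_⟩
    classical
    obtain ⟨M, hM, hmax⟩ := Finset.exists_max_image
      (G.powerset.filter fun M : Finset (Finset α) => (M : Set (Finset α)).PairwiseDisjoint id)
      Finset.card ⟨∅, by simp⟩
    simp only [Finset.mem_filter, Finset.mem_powerset] at hM hmax
    obtain ⟨hMG, hMd⟩ := hM
    by_cases hm : m ≤ M.card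
    · obtain ⟨S, hSM, hS⟩ := Finset.exists_subset_card_eq hm
      refine ⟨S, hSM.trans hMG, hS, ∅, by simp, ?_⟩
      intro A hA B hB hne
      simpa [Function.onFun] using hMd (hSM hA) (hSM hB) hne
    have hU : (M.biUnion id).card ≤ m * (k + 1) :=
      (Finset.card_biUnion_le_card_mul _ _ (k + 1) fun A hA => (hG A (hMG hA)).le).trans
        (Nat.mul_le_mul_right _ (by omega))
    have hmeet : ∀ A ∈ G, ∃ x ∈ M.biUnion id, x ∈ A := by
      intro A hA
      by_contra! hcon
      have hAd : ∀ B ∈ M, Disjoint A B := fun B hB => Finset.disjoint_right.2 fun x hx =>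
        hcon x (Finset.mem_biUnion.2 ⟨B, hB, hx⟩)
      have hAM : A ∉ M := fun hAM => by
        have := disjoint_self.1 (hAd A hAM)
        have h0 := hG A hA
        simp [this] at h0
      have := hmax (insert A M) ⟨Finset.insert_subset hA hMG, by
        rw [Finset.coe_insert]
        exact hMd.insert fun B hB _ => hAd B hB⟩
      rw [Finset.card_insert_of_notMem hAM] at this
      omega
    obtain ⟨x, -, hx⟩ : ∃ x ∈ M.biUnion id, R ≤ (G.filter fun A => x ∈ A).card := by
      by_contra! hcon
      have h1 : G ⊆ (M.biUnion id).biUnion fun x => G.filter fun A => x ∈ A := by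
        intro A hA
        obtain ⟨x, hx, hxA⟩ := hmeet A hA
        exact Finset.mem_biUnion.2 ⟨x, hx, by simp [hA, hxA]⟩
      have h2 := (Finset.card_le_card h1).trans
        (Finset.card_biUnion_le_card_mul _ _ R fun x hx => (hcon x hx).le)
      have h3 := Nat.mul_le_mul_right R hU
      omega
    have hinj : Set.InjOn (fun A : Finset α => A.erase x) (G.filter fun A => x ∈ A) := by
      intro A hA B hB hAB
      simp only [Finset.coe_filter, Set.mem_ofPred_eq] at hA hB
      rw [← Finset.insert_erase hA.2, ← Finset.insert_erase hB.2]
      exact congrArg (insert x) hAB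
    obtain ⟨S, hSG, hS, K, hK, hKd⟩ := ih α ((G.filter fun A => x ∈ A).image fun A => A.erase x)
      (by
        intro A hA
        obtain ⟨B, hB, rfl⟩ := Finset.mem_image.1 hA
        obtain ⟨hB, hxB⟩ := Finset.mem_filter.1 hB
        rw [Finset.card_erase_of_mem hxB, hG B hB, Nat.add_sub_cancel])
      (by rwa [Finset.card_image_of_injOn hinj])
    have hSx : ∀ A ∈ S, x ∉ A ∧ insert x A ∈ G := by
      intro A hA
      obtain ⟨B, hB, rfl⟩ := Finset.mem_image.1 (hSG hA)
      obtain ⟨hB, hxB⟩ := Finset.mem_filter.1 hB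
      simpa [Finset.insert_erase hxB] using hB
    refine ⟨S.image (insert x), ?_, ?_, insert x K, ?_, ?_⟩
    · intro A hA
      obtain ⟨B, hB, rfl⟩ := Finset.mem_image.1 hA
      exact (hSx B hB).2
    · rw [Finset.card_image_of_injOn, hS]
      intro A hA B hB hAB
      rw [← Finset.erase_insert (hSx A hA).1, ← Finset.erase_insert (hSx B hB).1]
      exact congrArg (fun C => Finset.erase C x) hAB
    · intro A hA
      obtain ⟨B, hB, rfl⟩ := Finset.mem_image.1 hA
      exact Finset.insert_subset_insert _ (hK B hB)
    · intro A hA B hB hne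
      obtain ⟨A', hA', rfl⟩ := Finset.mem_image.1 hA
      obtain ⟨B', hB', rfl⟩ := Finset.mem_image.1 hB
      have := hKd hA' hB' (fun h => hne (by rw [h]))
      simp only [Function.onFun, Finset.disjoint_left, Finset.mem_sdiff, Finset.mem_insert]
        at this ⊢
      grind

section SetPairs

variable {ι : Type*} {α : Type*} [DecidableEq α]

/-- **Bollobás's set pair inequality**. -/
theorem sum_inv_choose_le_one_of_disjoint_iff (X : Finset α) :
    ∀ (I : Finset ι) (A B : ι → Finset α), (∀ i ∈ I, A i ⊆ X) → (∀ i ∈ I, B i ⊆ X) →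
      (∀ i ∈ I, ∀ j ∈ I, Disjoint (A i) (B j) ↔ i = j) →
      ∑ i ∈ I, (((A i).card + (B i).card).choose (A i).card : ℚ)⁻¹ ≤ 1 := by
  classical
  induction hn : X.card generalizing X with
  | zero =>
    intro I A B hA hB h
    obtain rfl := Finset.card_eq_zero.1 hn
    have hI : I.card ≤ 1 := Finset.card_le_one.2 fun i hi j hj =>
      (h i hi j hj).1 (by simp [Finset.subset_empty.1 (hB j hj)])
    have : ∀ i ∈ I, (((A i).card + (B i).card).choose (A i).card : ℚ)⁻¹ = 1 := fun i hi => by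
      simp [Finset.subset_empty.1 (hB i hi)]
    rw [Finset.sum_congr rfl this]
    simpa using hI
  | succ n ih =>
    intro I A B hA hB h
    by_cases hne : ∃ i ∈ I, B i = ∅
    · obtain ⟨i, hi, hBi⟩ := hne
      have hI : I = {i} := Finset.eq_singleton_iff_unique_mem.2
        ⟨hi, fun j hj => (h j hj i hi).1 (by simp [hBi])⟩
      simp [hI, hBi]
    push Not at hne
    have hx : ∀ x ∈ X, ∑ i ∈ I.filter fun i => x ∉ A i,
        (((A i).card + ((B i).erase x).card).choose (A i).card : ℚ)⁻¹ ≤ 1 := by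
      intro x hx
      refine ih (X.erase x) (by rw [Finset.card_erase_of_mem hx, hn, Nat.add_sub_cancel])
        (I.filter fun i => x ∉ A i) A (fun i => (B i).erase x) ?_ ?_ ?_
      · intro i hi
        obtain ⟨hi, hxi⟩ := Finset.mem_filter.1 hi
        exact Finset.subset_erase.2 ⟨hA i hi, hxi⟩
      · intro i hi
        exact Finset.erase_subset_erase _ (hB i (Finset.mem_filter.1 hi).1)
      · intro i hi j hj
        obtain ⟨hi, hxi⟩ := Finset.mem_filter.1 hi
        rw [← h i hi j (Finset.mem_filter.1 hj).1, ← Finset.disjoint_erase_comm,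
          Finset.erase_eq_of_notMem hxi]
    have hsum := Finset.sum_le_card_nsmul X _ 1 hx
    simp only [Finset.sum_filter] at hsum
    rw [Finset.sum_comm] at hsum
    have hterm : ∀ i ∈ I, (∑ x ∈ X, if x ∉ A i then
        (((A i).card + ((B i).erase x).card).choose (A i).card : ℚ)⁻¹ else 0) =
        X.card * (((A i).card + (B i).card).choose (A i).card : ℚ)⁻¹ := by
      intro i hi
      have hd : Disjoint (A i) (B i) := (h i hi i hi).2 rfl
      obtain ⟨b, hb⟩ := Nat.exists_eq_succ_of_ne_zero
        (Finset.card_pos.2 (hne i hi)).ne'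
      set a := (A i).card with ha
      have hchoose : ((a + b + 1 : ℕ) : ℚ) * ((a + b).choose a : ℚ) =
          ((a + (b + 1)).choose a : ℚ) * ((b + 1 : ℕ) : ℚ) := by
        have := Nat.add_one_mul_choose_eq (a + b) b
        rw [Nat.choose_symm_add (a := a) (b := b), Nat.choose_symm_add (a := a) (b := b + 1)]
        exact_mod_cast this
      have hX : X = A i ∪ B i ∪ (X \ (A i ∪ B i)) :=
        (Finset.union_sdiff_of_subset (Finset.union_subset (hA i hi) (hB i hi))).symm
      have hcard : X.card = a + (b + 1) + (X \ (A i ∪ B i)).card := by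
        conv_lhs => rw [hX]
        rw [Finset.card_union_of_disjoint Finset.disjoint_sdiff, Finset.card_union_of_disjoint hd,
          hb]
      rw [hcard]
      conv_lhs => rw [hX]
      rw [Finset.sum_union Finset.disjoint_sdiff, Finset.sum_union hd]
      have s1 : (∑ x ∈ A i, if x ∉ A i then
          ((a + ((B i).erase x).card).choose a : ℚ)⁻¹ else 0) = 0 :=
        Finset.sum_eq_zero fun x hx => by simp [hx]
      have s2 : (∑ x ∈ B i, if x ∉ A i then
          ((a + ((B i).erase x).card).choose a : ℚ)⁻¹ else 0) =
          ((b + 1 : ℕ) : ℚ) * ((a + b).choose a : ℚ)⁻¹ := by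
        rw [Finset.sum_congr rfl (g := fun _ => ((a + b).choose a : ℚ)⁻¹), Finset.sum_const, hb,
          nsmul_eq_mul]
        intro x hx
        rw [if_pos (Finset.disjoint_right.1 hd hx), Finset.card_erase_of_mem hx, hb]
        simp
      have s3 : (∑ x ∈ X \ (A i ∪ B i), if x ∉ A i then
          ((a + ((B i).erase x).card).choose a : ℚ)⁻¹ else 0) =
          (X \ (A i ∪ B i)).card * ((a + (b + 1)).choose a : ℚ)⁻¹ := by
        rw [Finset.sum_congr rfl (g := fun _ => ((a + (b + 1)).choose a : ℚ)⁻¹),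
          Finset.sum_const, nsmul_eq_mul]
        intro x hx
        simp only [Finset.mem_sdiff, Finset.mem_union, not_or] at hx
        rw [if_pos hx.2.1, Finset.erase_eq_of_notMem hx.2.2, hb]
      rw [s1, s2, s3, hb]
      have p1 : ((a + b).choose a : ℚ) ≠ 0 := by
        exact_mod_cast (Nat.choose_pos (by omega)).ne'
      have p2 : ((a + (b + 1)).choose a : ℚ) ≠ 0 := by
        exact_mod_cast (Nat.choose_pos (by omega)).ne'
      have hq : ((b + 1 : ℕ) : ℚ) * ((a + b).choose a : ℚ)⁻¹ =
          ((a + b + 1 : ℕ) : ℚ) * ((a + (b + 1)).choose a : ℚ)⁻¹ := by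
        field_simp
        linarith
      rw [hq]
      push_cast
      ring
    rw [Finset.sum_congr rfl hterm, ← Finset.mul_sum, nsmul_eq_mul] at hsum
    have hpos : (0 : ℚ) < X.card := by rw [hn]; positivity
    exact le_of_mul_le_mul_left hsum hpos

/-- Bollobás's bound on the number of cross-intersecting set pairs of bounded size. -/
theorem card_le_choose_of_disjoint_iff {a b : ℕ} (I : Finset ι) (A B : ι → Finset α)
    (hA : ∀ i ∈ I, (A i).card ≤ a) (hB : ∀ i ∈ I, (B i).card ≤ b)
    (h : ∀ i ∈ I, ∀ j ∈ I, Disjoint (A i) (B j) ↔ i = j) : I.card ≤ (a + b).choose a := by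
  have h1 := sum_inv_choose_le_one_of_disjoint_iff (I.biUnion A ∪ I.biUnion B) I A B
    (fun i hi => (Finset.subset_biUnion_of_mem A hi).trans Finset.subset_union_left)
    (fun i hi => (Finset.subset_biUnion_of_mem B hi).trans Finset.subset_union_right) h
  have hpos : (0 : ℚ) < (a + b).choose a := by exact_mod_cast Nat.choose_pos (by omega)
  have h2 : I.card • ((a + b).choose a : ℚ)⁻¹ ≤
      ∑ i ∈ I, (((A i).card + (B i).card).choose (A i).card : ℚ)⁻¹ := by
    refine Finset.card_nsmul_le_sum _ _ _ fun i hi => ?_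
    have hle : ((A i).card + (B i).card).choose (A i).card ≤ (a + b).choose a := by
      calc ((A i).card + (B i).card).choose (A i).card
          ≤ ((A i).card + b).choose (A i).card :=
            Nat.choose_le_choose _ (by have := hB i hi; omega)
        _ = ((A i).card + b).choose b := Nat.choose_symm_add
        _ ≤ (a + b).choose b := Nat.choose_le_choose _ (by have := hA i hi; omega)
        _ = (a + b).choose a := Nat.choose_symm_add.symm
    have hp : (0 : ℚ) < ((A i).card + (B i).card).choose (A i).card := by
      exact_mod_cast Nat.choose_pos (by omega)
    exact inv_anti₀ hp (by exact_mod_cast hle)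
  have h3 := h2.trans h1
  rw [nsmul_eq_mul, ← div_eq_mul_inv, div_le_one hpos] at h3
  exact_mod_cast h3

end SetPairs

section Covers

variable {α : Type u} [DecidableEq α]

/-- If every `k`-set of `F` is missed by a set of `𝒦`, and the sets in `𝒦` have size at most `b`,
then boundedly many sets of `𝒦` suffice. -/
lemma exists_subset_card_le_choose {k b : ℕ} (F 𝒦 : Finset (Finset α))
    (hF : ∀ A ∈ F, A.card = k) (h𝒦 : ∀ K ∈ 𝒦, K.card ≤ b)
    (hcov : ∀ A ∈ F, ∃ K ∈ 𝒦, Disjoint K A) :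
    ∃ 𝒞 ⊆ 𝒦, 𝒞.card ≤ (k + b).choose k ∧ ∀ A ∈ F, ∃ K ∈ 𝒞, Disjoint K A := by
  classical
  obtain ⟨𝒞, h𝒞, hmin⟩ := Finset.exists_min_image
    (𝒦.powerset.filter fun 𝒞 => ∀ A ∈ F, ∃ K ∈ 𝒞, Disjoint K A) Finset.card
    ⟨𝒦, by simpa using hcov⟩
  simp only [Finset.mem_filter, Finset.mem_powerset] at h𝒞 hmin
  refine ⟨𝒞, h𝒞.1, ?_, h𝒞.2⟩
  have hpriv : ∀ K ∈ 𝒞, ∃ A ∈ F, ∀ K' ∈ 𝒞, K' ≠ K → ¬ Disjoint K' A := by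
    intro K hK
    by_contra! hcon
    have := hmin (𝒞.erase K) ⟨(Finset.erase_subset _ _).trans h𝒞.1, fun A hA => by
      obtain ⟨K', hK', hne, hd⟩ := hcon A hA
      exact ⟨K', Finset.mem_erase.2 ⟨hne, hK'⟩, hd⟩⟩
    have := Finset.card_erase_lt_of_mem hK
    omega
  choose! A hAF hA using hpriv
  refine card_le_choose_of_disjoint_iff 𝒞 A id (fun K hK => (hF _ (hAF K hK)).le)
    (fun K hK => h𝒦 K (h𝒞.1 hK)) fun K hK K' hK' => ⟨fun hd => ?_, ?_⟩
  · by_contra hne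
    exact hA K hK K' hK' (Ne.symm hne) hd.symm
  · rintro rfl
    obtain ⟨K', hK', hd⟩ := h𝒞.2 (A K) (hAF K hK)
    by_cases hne : K' = K
    · exact hne ▸ hd.symm
    · exact absurd hd (hA K hK K' hK' hne)

/-- A cover can be thinned out so that each remaining set covers at least `R` elements on its own,
while losing at most `R` elements for each set of the original cover. -/
lemma exists_subset_le_card_private (R : ℕ) (F 𝒞₀ : Finset (Finset α))
    (hcov : ∀ A ∈ F, ∃ K ∈ 𝒞₀, Disjoint K A) :
    ∃ 𝒞 ⊆ 𝒞₀, (F.filter fun A => ∀ K ∈ 𝒞, ¬ Disjoint K A).card ≤ R * 𝒞₀.card ∧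
      ∀ K ∈ 𝒞, R ≤ (F.filter fun A => Disjoint K A ∧
        ∀ K' ∈ 𝒞, K' ≠ K → ¬ Disjoint K' A).card := by
  obtain ⟨𝒞, h𝒞, hmin⟩ := Finset.exists_min_image 𝒞₀.powerset
    (fun 𝒞 => (F.filter fun A => ∀ K ∈ 𝒞, ¬ Disjoint K A).card + R * 𝒞.card)
    ⟨∅, by simp⟩
  rw [Finset.mem_powerset] at h𝒞
  refine ⟨𝒞, h𝒞, ?_, fun K hK => ?_⟩
  · have h1 := hmin 𝒞₀ (by simp)
    have h2 : (F.filter fun A => ∀ K ∈ 𝒞₀, ¬ Disjoint K A) = ∅ :=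
      Finset.filter_eq_empty_iff.2 fun A hA => by simpa using hcov A hA
    rw [h2, Finset.card_empty] at h1
    omega
  · have h1 := hmin (𝒞.erase K)
      (Finset.mem_powerset.2 ((Finset.erase_subset _ _).trans h𝒞))
    have h2 : (F.filter fun A => ∀ K' ∈ 𝒞.erase K, ¬ Disjoint K' A) ⊆
        (F.filter fun A => ∀ K ∈ 𝒞, ¬ Disjoint K A) ∪
        (F.filter fun A => Disjoint K A ∧ ∀ K' ∈ 𝒞, K' ≠ K → ¬ Disjoint K' A) := by
      intro A hA
      simp only [Finset.mem_union, Finset.mem_filter, Finset.mem_erase] at hA ⊢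
      grind
    have h3 := (Finset.card_le_card h2).trans (Finset.card_union_le _ _)
    have h4 : R * 𝒞.card = R * (𝒞.erase K).card + R := by
      rw [← Finset.card_erase_add_one hK]; ring
    omega

/-- Bound for families in which every edge misses at least `R` and at most `s` edges, where `R`
forces sunflowers with `k + d` petals. -/
lemma card_mul_le_of_forces_isSunflower {k d R s : ℕ} (hk : 1 < k) (F : Finset (Finset α))
    (hsun : ∀ G ⊆ F, R ≤ G.card → ∃ S ⊆ G, S.card = k + d ∧ ∃ K, IsSunflower S K)
    (hF : ∀ A ∈ F, A.card = k)
    (hR : ∀ A ∈ F, R ≤ (F.filter fun B => Disjoint A B).card)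
    (hs : ∀ A ∈ F, (F.filter fun B => Disjoint A B).card ≤ s) :
    F.card * d ≤ (2 * k - 2).choose (k - 1) * ((k + d) * s) +
      R * (k + (k - 1)).choose k * d := by
  classical
  set 𝒦 := (F.biUnion Finset.powerset).filter fun K =>
    ∃ S ⊆ F, S.card = k + d ∧ IsSunflower S K
  have hlt : ∀ K ∈ 𝒦, K.card ≤ k - 1 := by
    intro K hK
    obtain ⟨-, S, hSF, hS, hSK⟩ := Finset.mem_filter.1 hK
    have := hSK.card_kernel_lt (by omega) fun A hA => hF A (hSF hA)
    omega
  have hcov : ∀ A ∈ F, ∃ K ∈ 𝒦, Disjoint K A := by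
    intro A hA
    obtain ⟨S, hS, hScard, K, hK⟩ := hsun _ (Finset.filter_subset _ _) (hR A hA)
    obtain ⟨B, hB⟩ := Finset.card_pos.1 (show 0 < S.card by omega)
    have hBF := Finset.mem_filter.1 (hS hB)
    refine ⟨K, Finset.mem_filter.2 ⟨Finset.mem_biUnion.2 ⟨B, hBF.1,
      Finset.mem_powerset.2 (hK.1 B hB)⟩, S, hS.trans (Finset.filter_subset _ _), hScard, hK⟩, ?_⟩
    exact Finset.disjoint_of_subset_left (hK.1 B hB) hBF.2.symm
  obtain ⟨𝒞₀, h𝒞₀, h𝒞₀card, h𝒞₀cov⟩ := exists_subset_card_le_choose F 𝒦 hF hlt hcov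
  obtain ⟨𝒞, h𝒞, hU, hpriv⟩ := exists_subset_le_card_private R F 𝒞₀ h𝒞₀cov
  have h𝒞𝒦 := h𝒞.trans h𝒞₀
  have hL : ∀ K ∈ 𝒞, ∃ L : Finset α, L.card ≤ k - 1 ∧
      ∀ K' ∈ 𝒞, Disjoint L K' ↔ K = K' := by
    intro K hK
    obtain ⟨S, hS, hScard, L, hSL⟩ := hsun _ (Finset.filter_subset _ _) (hpriv K hK)
    have hS' := fun B (hB : B ∈ S) => Finset.mem_filter.1 (hS hB)
    refine ⟨L, ?_, fun K' hK' => ⟨fun hd => ?_, ?_⟩⟩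
    · have := hSL.card_kernel_lt (by omega) fun A hA => hF A (hS' A hA).1
      omega
    · by_contra hne
      have h1 := hSL.card_filter_not_disjoint_le hd
      rw [Finset.filter_true_of_mem fun B hB =>
        mt (fun h => h.symm) ((hS' B hB).2.2 K' hK' (Ne.symm hne))] at h1
      have := hlt K' (h𝒞𝒦 hK')
      omega
    · rintro rfl
      obtain ⟨B, hB⟩ := Finset.card_pos.1 (show 0 < S.card by omega)
      exact Finset.disjoint_of_subset_left (hSL.1 B hB) (hS' B hB).2.1.symm
  choose! L hLcard hL using hL
  have h𝒞card : 𝒞.card ≤ (2 * k - 2).choose (k - 1) := by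
    have := card_le_choose_of_disjoint_iff 𝒞 L id hLcard
      (fun K hK => hlt K (h𝒞𝒦 hK)) hL
    rwa [show k - 1 + (k - 1) = 2 * k - 2 by omega] at this
  have hD : ∀ K ∈ 𝒞, (F.filter fun B => Disjoint K B).card * d ≤ (k + d) * s := by
    intro K hK
    obtain ⟨-, S, hSF, hS, hSK⟩ := Finset.mem_filter.1 (h𝒞𝒦 hK)
    exact hSK.card_filter_disjoint_mul_le hS hF fun A hA => hs A (hSF hA)
  have hsub : F ⊆ (𝒞.biUnion fun K => F.filter fun B => Disjoint K B) ∪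
      F.filter fun A => ∀ K ∈ 𝒞, ¬ Disjoint K A := by
    intro A hA
    simp only [Finset.mem_union, Finset.mem_biUnion, Finset.mem_filter]
    grind
  have h1 : F.card ≤ ∑ K ∈ 𝒞, (F.filter fun B => Disjoint K B).card + R * 𝒞₀.card :=
    (Finset.card_le_card hsub).trans ((Finset.card_union_le _ _).trans
      (Nat.add_le_add Finset.card_biUnion_le hU))
  calc F.card * d
      ≤ (∑ K ∈ 𝒞, (F.filter fun B => Disjoint K B).card + R * 𝒞₀.card) * d :=
        Nat.mul_le_mul_right _ h1
    _ = ∑ K ∈ 𝒞, (F.filter fun B => Disjoint K B).card * d + R * 𝒞₀.card * d := by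
        rw [add_mul, Finset.sum_mul]
    _ ≤ 𝒞.card * ((k + d) * s) + R * 𝒞₀.card * d := by
        gcongr
        simpa using Finset.sum_le_card_nsmul _ _ _ hD
    _ ≤ _ := by gcongr

end Covers

/-- For every `k > 2` and real `ε > 0`, there exist constants `R` and `s0`
such that for every `s > s0`, any `k`-uniform `[R,s]`-almost intersecting hypergraph has at
most `(1+ε) * (s+1) * (2k-2 choose k-1)` edges. -/
theorem stmt_7 (k : ℕ) (hk : 2 < k) (ε : ℝ) (hε : 0 < ε) :
    ∃ R s0 : ℕ, ∀ s : ℕ, s0 < s →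
      ∀ (α : Type u) [DecidableEq α] (F : Finset (Finset α)),
        (∀ A ∈ F, A.card = k) →
        (∀ A ∈ F, R ≤ (F.filter fun B => Disjoint A B).card ∧
          (F.filter fun B => Disjoint A B).card ≤ s) →
        (F.card : ℝ) ≤ (1 + ε) * (s + 1) * Nat.choose (2 * k - 2) (k - 1) := by
  obtain ⟨d, hd⟩ := exists_nat_gt (2 * k / ε)
  obtain ⟨R, hR⟩ := exists_isSunflower_of_card_le.{u} (k + d) k
  obtain ⟨s0, hs0⟩ := exists_nat_gt (2 * (R * (k + (k - 1)).choose k : ℕ) / ε)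
  refine ⟨R, s0, fun s hs α _ F hF hFs => ?_⟩
  have hmain := card_mul_le_of_forces_isSunflower (by omega) F
    (fun G hG hGR => hR α G (fun A hA => hF A (hG hA)) hGR) hF
    (fun A hA => (hFs A hA).1) (fun A hA => (hFs A hA).2)
  have hC : (1 : ℝ) ≤ (2 * k - 2).choose (k - 1) := by
    exact_mod_cast Nat.choose_pos (by omega)
  have hdpos : (0 : ℝ) < d := lt_of_le_of_lt (by positivity) hd
  rw [div_lt_iff₀ hε] at hd hs0
  have hs' : (s0 : ℝ) < s := by exact_mod_cast hs
  have hmain' : (F.card : ℝ) * d ≤ (2 * k - 2).choose (k - 1) * ((k + d) * s) +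
      (R * (k + (k - 1)).choose k : ℕ) * d := by exact_mod_cast hmain
  set N : ℝ := ((R * (k + (k - 1)).choose k : ℕ) : ℝ)
  set C : ℝ := ((2 * k - 2).choose (k - 1) : ℝ)
  have hkd : ((k : ℝ) + d) * s ≤ (1 + ε / 2) * s * d := by
    have : (k : ℝ) * s ≤ (ε / 2 * d) * s := by gcongr; linarith
    linarith
  have hN : N ≤ ε / 2 * s * C := by
    have h1 : N ≤ ε / 2 * s := by nlinarith
    have h2 : ε / 2 * s * 1 ≤ ε / 2 * s * C := by gcongr
    linarith
  have hfin : (F.card : ℝ) * d ≤ ((1 + ε) * s * C) * d := by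
    have h1 : C * ((k + d) * s) ≤ C * ((1 + ε / 2) * s * d) := by gcongr
    have h2 : N * d ≤ (ε / 2 * s * C) * d := by gcongr
    linarith
  calc (F.card : ℝ) ≤ (1 + ε) * s * C := le_of_mul_le_mul_right hfin hdpos
    _ ≤ (1 + ε) * (s + 1) * C := by gcongr; linarith
end
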